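/- arXiv:2307.14091 — 9 statements merged into one kernel-verified Lean document; each statement's English description precedes it below -/
import Mathlib

section
/- Let x, y, z be real numbers with 0 < x ≤ y ≤ z ≤ 1. Then x^(y−z) · y^(z−x) · z^(x−y) ≥ 1; equivalently, (y−z)·log x + (z−x)·log y + (x−y)·log z ≥ 0. -/
/-- Inequality part of the auxiliary Lemma: for `0 < x ≤ y ≤ z ≤ 1`,
`x^(y−z) · y^(z−x) · z^(x−y) ≥ 1`, equivalently
`(y−z)·log x + (z−x)·log y + (x−y)·log z ≥ 0`. -/
theorem statistical_complexity_aux_lemma_ineq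
    (x y z : ℝ) (hx : 0 < x) (hxy : x ≤ y) (hyz : y ≤ z) (hz : z ≤ 1) :
    1 ≤ x ^ (y - z) * y ^ (z - x) * z ^ (x - y) ∧
      0 ≤ (y - z) * Real.log x + (z - x) * Real.log y + (x - y) * Real.log z := by
  have hy : 0 < y := lt_of_lt_of_le hx hxy
  have hz0 : 0 < z := lt_of_lt_of_le hy hyz
  have key : 0 ≤ (y - z) * Real.log x + (z - x) * Real.log y + (x - y) * Real.log z := by
    have h1 := Real.log_le_sub_one_of_pos (div_pos hx hy)
    have h2 := Real.log_le_sub_one_of_pos (div_pos hz0 hy)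
    rw [Real.log_div hx.ne' hy.ne'] at h1
    rw [Real.log_div hz0.ne' hy.ne'] at h2
    have h3 := mul_le_mul_of_nonneg_left h1 (sub_nonneg.2 hyz)
    have h4 := mul_le_mul_of_nonneg_left h2 (sub_nonneg.2 hxy)
    have h5 : (z - y) * (x / y - 1) + (y - x) * (z / y - 1) = 0 := by
      field_simp
      ring
    nlinarith
  refine ⟨?_, key⟩
  rw [Real.rpow_def_of_pos hx, Real.rpow_def_of_pos hy, Real.rpow_def_of_pos hz0,
    ← Real.exp_add, ← Real.exp_add]
  apply Real.one_le_exp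
  linarith
end

section
/- Let x, y, z be real numbers with 0 < x ≤ y ≤ z ≤ 1. Then x^(y−z) · y^(z−x) · z^(x−y) = 1 if and only if x = y or y = z. In particular, if x < y and y < z then x^(y−z) · y^(z−x) · z^(x−y) > 1. -/
/-- Equality characterization in the auxiliary Lemma: for `0 < x ≤ y ≤ z ≤ 1`,
`x^(y−z) · y^(z−x) · z^(x−y) = 1` iff `x = y` or `y = z`; in particular the
product is `> 1` when `x < y` and `y < z`. -/
theorem statistical_complexity_aux_lemma_eq
    (x y z : ℝ) (hx : 0 < x) (hxy : x ≤ y) (hyz : y ≤ z) (hz : z ≤ 1) :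
    (x ^ (y - z) * y ^ (z - x) * z ^ (x - y) = 1 ↔ x = y ∨ y = z) ∧
      (x < y → y < z → 1 < x ^ (y - z) * y ^ (z - x) * z ^ (x - y)) := by
  have hy : 0 < y := hx.trans_le hxy
  have hz0 : 0 < z := hy.trans_le hyz
  have key : x ^ (y - z) * y ^ (z - x) * z ^ (x - y) =
      Real.exp ((z - y) * (Real.log y - Real.log x) - (y - x) * (Real.log z - Real.log y)) := by
    rw [Real.rpow_def_of_pos hx, Real.rpow_def_of_pos hy, Real.rpow_def_of_pos hz0,
      ← Real.exp_add, ← Real.exp_add]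
    congr 1
    ring
  have main : x < y → y < z → 1 < x ^ (y - z) * y ^ (z - x) * z ^ (x - y) := by
    intro h1 h2
    rw [key, Real.one_lt_exp_iff]
    have h := strictConcaveOn_log_Ioi.slope_anti_adjacent (Set.mem_Ioi.2 hx)
      (Set.mem_Ioi.2 hz0) h1 h2
    rw [div_lt_div_iff₀ (sub_pos.2 h2) (sub_pos.2 h1)] at h
    linarith
  refine ⟨⟨fun h => ?_, fun h => ?_⟩, main⟩
  · by_contra hne
    rw [not_or] at hne
    exact (main (lt_of_le_of_ne hxy hne.1) (lt_of_le_of_ne hyz hne.2)).ne' h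
  · rw [key, Real.exp_eq_one_iff]
    rcases h with rfl | rfl <;> ring
end

section
/- Let a, b, c be real numbers with 0 < a ≤ 1, 0 < b ≤ 1, 0 < c ≤ 1. If a^(c−b) · b^(a−c) · c^(b−a) = 1, then at least two of a, b, c are equal (a = b or b = c or a = c). -/
lemma aux_log_slope (x y z : ℝ) (hx : 0 < x) (hxy : x < y) (hyz : y < z) :
    (Real.log z - Real.log y) * (y - x) < (Real.log y - Real.log x) * (z - y) := by
  have h := strictConcaveOn_log_Ioi.slope_anti_adjacent (Set.mem_Ioi.2 hx)
    (Set.mem_Ioi.2 (hx.trans (hxy.trans hyz))) hxy hyz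
  rwa [div_lt_div_iff₀ (sub_pos.2 hyz) (sub_pos.2 hxy)] at h

/-- Applied form of the auxiliary Lemma: if `0 < a, b, c ≤ 1` and
`a^(c−b) · b^(a−c) · c^(b−a) = 1`, then at least two of `a, b, c` coincide. -/
theorem stationarity_equation_two_equal
    (a b c : ℝ) (ha0 : 0 < a) (ha1 : a ≤ 1) (hb0 : 0 < b) (hb1 : b ≤ 1)
    (hc0 : 0 < c) (hc1 : c ≤ 1)
    (h : a ^ (c - b) * b ^ (a - c) * c ^ (b - a) = 1) :
    a = b ∨ b = c ∨ a = c := by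
  have hg : (c - b) * Real.log a + (a - c) * Real.log b + (b - a) * Real.log c = 0 := by
    have h2 := congrArg Real.log h
    rwa [Real.log_mul (by positivity) (by positivity), Real.log_mul (by positivity) (by positivity),
      Real.log_rpow ha0, Real.log_rpow hb0, Real.log_rpow hc0, Real.log_one] at h2
  by_contra hne
  push Not at hne
  obtain ⟨h1, h2, h3⟩ := hne
  rcases lt_or_gt_of_ne h1 with h1 | h1 <;> rcases lt_or_gt_of_ne h2 with h2 | h2 <;>
    rcases lt_or_gt_of_ne h3 with h3 | h3
  · linarith [aux_log_slope a b c ha0 h1 h2]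
  · linarith
  · linarith [aux_log_slope a c b ha0 h3 h2]
  · linarith [aux_log_slope c a b hc0 h3 h1]
  · linarith [aux_log_slope b a c hb0 h1 h3]
  · linarith [aux_log_slope b c a hb0 h2 h3]
  · linarith
  · linarith [aux_log_slope c b a hc0 h2 h1]
end

section
/- Let N ≥ 3 and let p = (p_1, …, p_N) be a vector of real numbers with 0 < p_i < 1 for all i and ∑_{i=1}^N p_i = 1. Define the normalized Shannon entropy H(p) = −(1/log N)·∑_{i=1}^N p_i·log p_i and the disequilibrium D(p) = ∑_{i=1}^N (p_i − 1/N)². Suppose D(p) > 0 and that the stationarity equations (1/log N)·(log p_N − log p_i)·D(p) + 2·H(p)·(p_i − p_N) = 0 hold for every i = 1, …, N−1. Then the set of values {p_1, …, p_N} contains at most two distinct elements. -/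
theorem aux_line (c d x y z : ℝ) (hx : 0 < x) (hxy : x < y) (hyz : y < z)
    (h1 : Real.log x = c * x + d) (h2 : Real.log y = c * y + d)
    (h3 : Real.log z = c * z + d) : False := by
  have h := strictConcaveOn_log_Ioi.slope_anti_adjacent (x := x) (y := y) (z := z)
    (Set.mem_Ioi.2 hx) (Set.mem_Ioi.2 (by linarith)) hxy hyz
  rw [div_lt_div_iff₀ (by linarith) (by linarith), h1, h2, h3] at h
  nlinarith

open Finset in
/-- If a strictly interior distribution `p` on `N ≥ 3` points with positive
disequilibrium satisfies the first-order stationarity conditions of the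
statistical complexity `C_SQ = H · D` (with `p_N` eliminated), then `p` takes
at most two distinct values. -/
theorem CSQ_stationary_two_values
    (N : ℕ) (hN : 3 ≤ N) (p : Fin N → ℝ)
    (hp0 : ∀ i, 0 < p i) (hp1 : ∀ i, p i < 1)
    (hsum : ∑ i, p i = 1)
    (D : ℝ) (hD : D = ∑ i, (p i - 1 / N) ^ 2)
    (H : ℝ) (hH : H = -(1 / Real.log N) * ∑ i, p i * Real.log (p i))
    (hDpos : 0 < D)
    (hstat : ∀ i : Fin N, (i : ℕ) ≠ N - 1 →
      (1 / Real.log N) * (Real.log (p ⟨N - 1, by omega⟩) - Real.log (p i)) * D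
        + 2 * H * (p i - p ⟨N - 1, by omega⟩) = 0) :
    ∃ a b : ℝ, ∀ i, p i = a ∨ p i = b := by
  have hL : 0 < Real.log N := Real.log_pos (by exact_mod_cast (by omega : 1 < N))
  set q := p ⟨N - 1, by omega⟩ with hq
  obtain ⟨c, hc⟩ : ∃ c : ℝ, c = 2 * H * Real.log N / D := ⟨_, rfl⟩
  have key : ∀ i, Real.log (p i) = c * p i + (Real.log q - c * q) := by
    intro i
    by_cases hi : (i : ℕ) = N - 1
    · have : p i = q := by
        rw [hq]; congr 1; exact Fin.ext hi
      rw [this]; ring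
    · have h := hstat i hi
      rw [hc]
      field_simp at h ⊢
      linarith
  have hq0 : 0 < q := hp0 _
  have keyq : Real.log q = c * q + (Real.log q - c * q) := by ring
  by_cases hall : ∀ i, p i = q
  · exact ⟨q, q, fun i => Or.inl (hall i)⟩
  · push Not at hall
    obtain ⟨j, hj⟩ := hall
    refine ⟨q, p j, fun i => ?_⟩
    by_contra hcon
    push Not at hcon
    obtain ⟨h1, h2⟩ := hcon
    have hi0 := hp0 i
    have hj0 := hp0 j
    have ki := key i
    have kj := key j
    rcases lt_or_gt_of_ne h1 with a | a <;> rcases lt_or_gt_of_ne h2 with b | b <;>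
      rcases lt_or_gt_of_ne hj with e | e <;>
      first
      | exact aux_line _ _ _ _ _ hi0 a e ki keyq kj
      | exact aux_line _ _ _ _ _ hi0 b e ki kj keyq
      | exact aux_line _ _ _ _ _ hj0 b a kj ki keyq
      | exact aux_line _ _ _ _ _ hj0 e a kj keyq ki
      | exact aux_line _ _ _ _ _ hq0 a b keyq ki kj
      | exact aux_line _ _ _ _ _ hq0 e b keyq kj ki
      | linarith
end

section
/- Fix t with 0 < t < 1. For each integer N ≥ 2 let p^N be the discrete probability distribution on N points with p^N_N = t and p^N_i = (1−t)/(N−1) for i = 1, …, N−1. Then C_SQ(p^N) converges to (1−t)·t² as N → ∞. Moreover, for all t ∈ [0,1] one has (1−t)·t² ≤ 4/27, with equality if and only if t = 2/3. -/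
open Finset in
/-- For fixed `t ∈ (0,1)`, the complexity `C_SQ` of the one-spike distribution
`p^N = (…, (1−t)/(N−1), …, t)` tends to `(1−t)·t²` as `N → ∞`; moreover
`(1−t)·t² ≤ 4/27` on `[0,1]`, with equality iff `t = 2/3`. -/
theorem CSQ_one_spike_limit (t : ℝ) (ht0 : 0 < t) (ht1 : t < 1) :
    Filter.Tendsto
      (fun N : ℕ =>
        (-(1 / Real.log N) * ∑ i : Fin N,
            (if (i : ℕ) = N - 1 then t else (1 - t) / (N - 1)) *
              Real.log (if (i : ℕ) = N - 1 then t else (1 - t) / (N - 1))) *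
          (∑ i : Fin N,
            ((if (i : ℕ) = N - 1 then t else (1 - t) / (N - 1)) - 1 / N) ^ 2))
      Filter.atTop (nhds ((1 - t) * t ^ 2)) ∧
    ∀ s : ℝ, 0 ≤ s → s ≤ 1 →
      (1 - s) * s ^ 2 ≤ 4 / 27 ∧ ((1 - s) * s ^ 2 = 4 / 27 ↔ s = 2 / 3) := by
  constructor
  · have hL : Filter.Tendsto (fun n : ℕ => Real.log ((n : ℝ) + 1)) Filter.atTop Filter.atTop :=
      Real.tendsto_log_atTop.comp
        (Filter.tendsto_atTop_add_const_right _ _ tendsto_natCast_atTop_atTop)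
    have hLi := hL.inv_tendsto_atTop
    have hd := Real.tendsto_log_nat_add_one_sub_log
    have h1 : Filter.Tendsto (fun n : ℕ => ((n : ℝ))⁻¹) Filter.atTop (nhds 0) :=
      tendsto_natCast_atTop_atTop.inv_tendsto_atTop
    have h2 : Filter.Tendsto (fun n : ℕ => ((n : ℝ) + 1)⁻¹) Filter.atTop (nhds 0) :=
      (Filter.tendsto_atTop_add_const_right _ _ tendsto_natCast_atTop_atTop).inv_tendsto_atTop
    have hH : Filter.Tendsto (fun n : ℕ => (1 - t)
        - (Real.log ((n : ℝ) + 1))⁻¹ * ((1 - t) * (Real.log (1 - t)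
          + (Real.log ((n : ℝ) + 1) - Real.log n)) + t * Real.log t))
        Filter.atTop (nhds ((1 - t) - 0 * ((1 - t) * (Real.log (1 - t) + 0) + t * Real.log t))) :=
      (hLi.mul (((hd.const_add _).const_mul _).add_const _)).const_sub _
    have hD : Filter.Tendsto (fun n : ℕ => ((1 - t) ^ 2 * (n : ℝ)⁻¹
        - 2 * (1 - t) * ((n : ℝ) + 1)⁻¹ + (((n : ℝ) + 1)⁻¹ - ((n : ℝ) + 1)⁻¹ ^ 2))
        + (t - ((n : ℝ) + 1)⁻¹) ^ 2)
        Filter.atTop (nhds (((1 - t) ^ 2 * 0 - 2 * (1 - t) * 0 + (0 - 0 ^ 2)) + (t - 0) ^ 2)) :=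
      (((h1.const_mul _).sub (h2.const_mul _)).add (h2.sub (h2.pow 2))).add
        ((h2.const_sub _).pow 2)
    rw [← Filter.tendsto_add_atTop_iff_nat 1]
    have hHD := hH.mul hD
    have e : ((1 - t) - 0 * ((1 - t) * (Real.log (1 - t) + 0) + t * Real.log t)) *
        (((1 - t) ^ 2 * 0 - 2 * (1 - t) * 0 + (0 - 0 ^ 2)) + (t - 0) ^ 2) = (1 - t) * t ^ 2 := by
      ring
    rw [e] at hHD
    refine hHD.congr' ?_
    filter_upwards [Filter.eventually_ge_atTop 1] with n hn
    have hn0 : (0 : ℝ) < n := by exact_mod_cast hn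
    have hlog : 0 < Real.log ((n : ℝ) + 1) := Real.log_pos (by linarith)
    have hne : ∀ i : Fin n, ((i : ℕ) = n) ↔ False := fun i => by
      have := i.isLt
      simp only [iff_false]; omega
    simp only [Fin.sum_univ_castSucc, Fin.val_castSucc, Fin.val_last, Nat.add_sub_cancel, hne,
      if_true, if_false, Finset.sum_const, Finset.card_univ, Fintype.card_fin, nsmul_eq_mul,
      Nat.cast_add, Nat.cast_one, add_sub_cancel_right]
    rw [Real.log_div (by linarith) hn0.ne']
    congr 1
    · field_simp
      ring
    · field_simp
      ring
  · intro s hs0 hs1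
    have key : 4 / 27 - (1 - s) * s ^ 2 = (s - 2 / 3) ^ 2 * (s + 1 / 3) := by ring
    refine ⟨?_, ?_, ?_⟩
    · have : 0 ≤ (s - 2 / 3) ^ 2 * (s + 1 / 3) := by positivity
      linarith
    · intro h
      rw [h, sub_self] at key
      rcases mul_eq_zero.mp key.symm with h | h
      · have := pow_eq_zero_iff (two_ne_zero) |>.mp h
        linarith
      · linarith
    · rintro rfl
      norm_num
end

section
/- Let N ≥ 2, let K be an integer with 1 ≤ K ≤ N−1, let 0 ≤ p_max ≤ 1, and set ω = K/N. Let p be the discrete probability distribution on N points with p_i = (1−p_max)/K for i = 1, …, K and p_i = p_max/(N−K) for i = K+1, …, N. Then the disequilibrium D_SQ(p) = ∑_{i=1}^N (p_i − 1/N)² equals (1/N)·(p_max + ω − 1)² / (ω·(1−ω)). -/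
open Finset in
/-- The disequilibrium `D_SQ` of the two-level distribution (first `K`
components equal to `(1−p_max)/K`, remaining `N−K` components equal to
`p_max/(N−K)`) equals `(1/N)·(p_max + ω − 1)²/(ω·(1−ω))` with `ω = K/N`. -/
theorem DSQ_two_level_family
    (N K : ℕ) (hN : 2 ≤ N) (hK1 : 1 ≤ K) (hKN : K ≤ N - 1)
    (pmax : ℝ) (hpm0 : 0 ≤ pmax) (hpm1 : pmax ≤ 1)
    (ω : ℝ) (hω : ω = (K : ℝ) / N)
    (p : Fin N → ℝ)
    (hp : ∀ i : Fin N, p i = if (i : ℕ) < K then (1 - pmax) / K else pmax / (N - K)) :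
    ∑ i, (p i - 1 / N) ^ 2 = (1 / N) * (pmax + ω - 1) ^ 2 / (ω * (1 - ω)) := by
  obtain ⟨M, rfl⟩ : ∃ M, N = K + M := ⟨N - K, by omega⟩
  have hM : 1 ≤ M := by omega
  have hK' : (0 : ℝ) < K := by exact_mod_cast hK1
  have hM' : (0 : ℝ) < M := by exact_mod_cast hM
  rw [Fin.sum_univ_add]
  simp only [hp, Fin.val_castAdd, Fin.val_natAdd, Fin.is_lt, if_true]
  have h : ∀ i : Fin M, ¬ (K + (i : ℕ) < K) := fun i => by omega
  simp only [h, if_false, Finset.sum_const, Finset.card_univ, Fintype.card_fin, nsmul_eq_mul]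
  have h1 : 1 - ω = (M : ℝ) / (K + M) := by
    rw [hω]; push_cast; field_simp; ring
  rw [h1, hω]
  push_cast
  rw [add_sub_cancel_left]
  field_simp
  ring
end

section
/- Let N ≥ 2, let K be an integer with 1 ≤ K ≤ N−1, let 0 ≤ p_max ≤ 1, and set ω = K/N. Assume 1 − p_max ≤ ω (equivalently (1−p_max)/K ≤ 1/N ≤ p_max/(N−K)). Let p be the discrete probability distribution on N points with p_i = (1−p_max)/K for i = 1, …, K and p_i = p_max/(N−K) for i = K+1, …, N, and let q = (1/N, …, 1/N) be the uniform distribution. Then the total variation TV(p,q) = (1/2)·∑_{i=1}^N |p_i − 1/N| equals p_max + ω − 1, and hence the disequilibrium D_TV(p) = TV(p,q)² equals (p_max + ω − 1)². -/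
open Finset in
/-- If `1 − p_max ≤ ω`, the total variation between the two-level distribution
and the uniform distribution is `TV(p,q) = p_max + ω − 1`, hence the
disequilibrium `D_TV(p) = TV(p,q)²` equals `(p_max + ω − 1)²`. -/
theorem DTV_two_level_family
    (N K : ℕ) (hN : 2 ≤ N) (hK1 : 1 ≤ K) (hKN : K ≤ N - 1)
    (pmax : ℝ) (hpm0 : 0 ≤ pmax) (hpm1 : pmax ≤ 1)
    (ω : ℝ) (hω : ω = (K : ℝ) / N) (hord : 1 - pmax ≤ ω)
    (p : Fin N → ℝ)
    (hp : ∀ i : Fin N, p i = if (i : ℕ) < K then (1 - pmax) / K else pmax / (N - K)) :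
    (1 / 2) * ∑ i, |p i - 1 / N| = pmax + ω - 1 ∧
      ((1 / 2) * ∑ i, |p i - 1 / N|) ^ 2 = (pmax + ω - 1) ^ 2 := by
  have key : (1 / 2) * ∑ i, |p i - 1 / N| = pmax + ω - 1 := by
    obtain ⟨M, rfl⟩ : ∃ M, N = K + M := ⟨N - K, by omega⟩
    have hK : (0 : ℝ) < K := by exact_mod_cast hK1
    have hM : (0 : ℝ) < M := by
      have : 0 < M := by omega
      exact_mod_cast this
    have hNM : (0 : ℝ) < (K : ℝ) + M := by positivity
    push_cast at hω hp ⊢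
    have h0 : (1 - pmax) * (K + M) ≤ K := by
      rw [hω, le_div_iff₀ hNM] at hord
      exact hord
    have h1 : (1 - pmax) / K - 1 / ((K : ℝ) + M) ≤ 0 := by
      rw [sub_nonpos, div_le_div_iff₀ hK hNM]
      linarith
    have h2 : 0 ≤ pmax / M - 1 / ((K : ℝ) + M) := by
      rw [sub_nonneg, div_le_div_iff₀ hNM hM]
      linarith
    rw [Fin.sum_univ_add]
    have e1 : ∀ i : Fin K, |p (Fin.castAdd M i) - 1 / ((K : ℝ) + M)|
        = -((1 - pmax) / K - 1 / ((K : ℝ) + M)) := by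
      intro i
      rw [hp, if_pos (by simp), abs_of_nonpos h1]
    have e2 : ∀ i : Fin M, |p (Fin.natAdd K i) - 1 / ((K : ℝ) + M)|
        = pmax / M - 1 / ((K : ℝ) + M) := by
      intro i
      rw [hp, if_neg (by simp), add_sub_cancel_left, abs_of_nonneg h2]
    simp only [e1, e2, Finset.sum_const, Finset.card_univ, Fintype.card_fin, nsmul_eq_mul]
    rw [hω]
    field_simp
    ring
  exact ⟨key, by rw [key]⟩
end

section
/- Let p and q be discrete probability distributions on N points. Then the Jensen–Shannon divergence is bounded by the total variation: JSD(p||q) ≤ TV(p,q), where JSD(p||q) = (1/2)·∑_{i=1}^N p_i·log(p_i/m_i) + (1/2)·∑_{i=1}^N q_i·log(q_i/m_i) with m = (p+q)/2 (natural logarithm, with summands involving p_i = 0 or q_i = 0 interpreted as 0), and TV(p,q) = (1/2)·∑_{i=1}^N |p_i − q_i|. -/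
theorem JSD_aux (a b : ℝ) (ha : 0 ≤ a) (hb : 0 ≤ b) :
    a * Real.log (a / ((a + b) / 2)) ≤ a * ((a - b) / (a + b)) := by
  rcases ha.eq_or_lt with h | h
  · simp [← h]
  · have hs : 0 < a + b := by linarith
    refine mul_le_mul_of_nonneg_left ?_ ha
    refine (Real.log_le_sub_one_of_pos (by positivity)).trans (le_of_eq ?_)
    field_simp
    ring

theorem JSD_pt (a b : ℝ) (ha : 0 ≤ a) (hb : 0 ≤ b) :
    a * Real.log (a / ((a + b) / 2)) + b * Real.log (b / ((a + b) / 2)) ≤ |a - b| := by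
  have h1 := JSD_aux a b ha hb
  have h2 := JSD_aux b a hb ha
  rw [add_comm b a] at h2
  have h3 : a * ((a - b) / (a + b)) + b * ((b - a) / (a + b)) ≤ |a - b| := by
    have e : a * ((a - b) / (a + b)) + b * ((b - a) / (a + b))
        = |a - b| * |a - b| / (a + b) := by
      rw [abs_mul_abs_self]; ring
    rw [e]
    have h4 : |a - b| ≤ a + b := by
      rw [abs_le]; constructor <;> linarith
    exact div_le_of_le_mul₀ (by linarith) (abs_nonneg _)
      (mul_le_mul_of_nonneg_left h4 (abs_nonneg _))
  linarith

open Finset in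
/-- The Jensen–Shannon divergence between two discrete probability
distributions is bounded above by their total variation:
`JSD(p‖q) ≤ TV(p,q)`. -/
theorem JSD_le_TV
    (N : ℕ) (p q : Fin N → ℝ)
    (hp0 : ∀ i, 0 ≤ p i) (hq0 : ∀ i, 0 ≤ q i)
    (hpsum : ∑ i, p i = 1) (hqsum : ∑ i, q i = 1) :
    (1 / 2) * ∑ i, p i * Real.log (p i / ((p i + q i) / 2))
        + (1 / 2) * ∑ i, q i * Real.log (q i / ((p i + q i) / 2))
      ≤ (1 / 2) * ∑ i, |p i - q i| := by
  rw [← mul_add, ← Finset.sum_add_distrib]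
  exact mul_le_mul_of_nonneg_left
    (Finset.sum_le_sum fun i _ => JSD_pt _ _ (hp0 i) (hq0 i)) (by norm_num)
end

section
/- Let N ≥ 3, let K be an integer with 1 ≤ K ≤ N−1, and let p = (p_1, …, p_N) be a vector of real numbers with 0 < p_i < 1 for all i and ∑_{i=1}^N p_i = 1. Let D = ((1/2)·∑_{i=1}^N |p_i − 1/N|)² and let H(p) = −(1/log N)·∑_{i=1}^N p_i·log p_i. Suppose D > 0, H(p) > 0, and the stationarity equations hold: for each i = 1, …, K, −(1/log N)·(log p_i − log p_N)·D − 2·H(p)·√D = 0, and for each i = K+1, …, N−1, −(1/log N)·(log p_i − log p_N)·D = 0. Then p_i = p_j for all i, j ∈ {1, …, K} and p_i = p_N for all i ∈ {K+1, …, N}; that is, p belongs to the two-level family assigning a common value (1−p_max)/K to the first K components and a common value p_max/(N−K) to the remaining N−K components for some p_max. -/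
open Finset in
/-- If a strictly interior distribution `p` on `N ≥ 3` points satisfies the
first-order stationarity conditions of the total-variation complexity
`C_TV = H · D_TV` (with `p_N` eliminated) on the region where the first `K`
components lie below `1/N` and the rest above, then `p` belongs to the
two-level family: the first `K` components share a common value `(1−p_max)/K`
and the remaining `N−K` components share the value `p_max/(N−K)`. -/
theorem CTV_stationary_two_level
    (N K : ℕ) (hN : 3 ≤ N) (hK1 : 1 ≤ K) (hKN : K ≤ N - 1)
    (p : Fin N → ℝ) (hp0 : ∀ i, 0 < p i) (hp1 : ∀ i, p i < 1)
    (hsum : ∑ i, p i = 1)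
    (D : ℝ) (hD : D = ((1 / 2) * ∑ i, |p i - 1 / N|) ^ 2)
    (H : ℝ) (hH : H = -(1 / Real.log N) * ∑ i, p i * Real.log (p i))
    (hDpos : 0 < D) (hHpos : 0 < H)
    (hstat1 : ∀ i : Fin N, (i : ℕ) < K →
      -(1 / Real.log N) * (Real.log (p i) - Real.log (p ⟨N - 1, by omega⟩)) * D
        - 2 * H * Real.sqrt D = 0)
    (hstat2 : ∀ i : Fin N, K ≤ (i : ℕ) → (i : ℕ) ≠ N - 1 →
      -(1 / Real.log N) * (Real.log (p i) - Real.log (p ⟨N - 1, by omega⟩)) * D = 0) :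
    (∀ i j : Fin N, (i : ℕ) < K → (j : ℕ) < K → p i = p j) ∧
      (∀ i : Fin N, K ≤ (i : ℕ) → p i = p ⟨N - 1, by omega⟩) ∧
      ∃ pmax : ℝ,
        (∀ i : Fin N, (i : ℕ) < K → p i = (1 - pmax) / K) ∧
        (∀ i : Fin N, K ≤ (i : ℕ) → p i = pmax / (N - K)) := by
  have hNR : (1 : ℝ) < N := by exact_mod_cast (by omega : 1 < N)
  have hlog : 0 < Real.log N := Real.log_pos hNR
  have hc : -(1 / Real.log N) ≠ 0 := by
    have : 0 < 1 / Real.log N := by positivity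
    linarith
  have hA : ∀ i j : Fin N, (i : ℕ) < K → (j : ℕ) < K → p i = p j := by
    intro i j hi hj
    have h1 := hstat1 i hi
    have h2 := hstat1 j hj
    have h3 : (-(1 / Real.log N) * D) * (Real.log (p i) - Real.log (p j)) = 0 := by
      linear_combination h1 - h2
    rcases mul_eq_zero.mp h3 with h | h
    · exact absurd h (mul_ne_zero hc hDpos.ne')
    · exact Real.log_injOn_pos (hp0 i) (hp0 j) (by linarith)
  have hB : ∀ i : Fin N, K ≤ (i : ℕ) → p i = p ⟨N - 1, by omega⟩ := by
    intro i hi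
    by_cases hl : (i : ℕ) = N - 1
    · congr 1
      exact Fin.ext hl
    · have h3 : (-(1 / Real.log N) * D) *
          (Real.log (p i) - Real.log (p ⟨N - 1, by omega⟩)) = 0 := by
        linear_combination hstat2 i hi hl
      rcases mul_eq_zero.mp h3 with h | h
      · exact absurd h (mul_ne_zero hc hDpos.ne')
      · exact Real.log_injOn_pos (hp0 i) (hp0 _) (by linarith)
  refine ⟨hA, hB, ?_⟩
  have hKR : (0 : ℝ) < K := by exact_mod_cast (by omega : 0 < K)
  have hKNR : (0 : ℝ) < N - K := by
    have : (K : ℝ) < N := by exact_mod_cast (by omega : K < N)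
    linarith
  have key : (K : ℝ) * p ⟨0, by omega⟩ + (N - K) * p ⟨N - 1, by omega⟩ = 1 := by
    rw [← hsum]
    generalize ha : p ⟨0, by omega⟩ = a
    generalize hb : p ⟨N - 1, by omega⟩ = b
    have h1 : ∀ i : Fin N, p i = (fun n : ℕ => if n < K then a else b) (i : ℕ) := by
      intro i
      by_cases h : (i : ℕ) < K
      · simp only [h, if_true]
        rw [← ha]
        exact hA _ _ h (by show 0 < K; omega)
      · simp only [h, if_false]
        rw [← hb]
        exact hB _ (by omega)
    rw [Finset.sum_congr rfl (fun i _ => h1 i),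
      Fin.sum_univ_eq_sum_range (fun n : ℕ => if n < K then a else b) N]
    obtain ⟨M, hM⟩ : ∃ M, N = K + M := ⟨N - K, by omega⟩
    have hMR : (N : ℝ) = K + M := by exact_mod_cast hM
    rw [hMR, hM, Finset.sum_range_add,
      Finset.sum_congr rfl (g := fun _ => a)
        (fun i hi => if_pos (Finset.mem_range.mp hi))]
    simp
  refine ⟨(N - K) * p ⟨N - 1, by omega⟩, ?_, ?_⟩
  · intro i hi
    rw [hA i ⟨0, by omega⟩ hi (by show 0 < K; omega), eq_div_iff hKR.ne']
    linarith
  · intro i hi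
    rw [hB i hi, eq_div_iff hKNR.ne']
    ring
end
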